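/- arXiv:math/0602235 — 3 statements merged into one kernel-verified Lean document; each statement's English description precedes it below -/
import Mathlib

section
/- Let (A, m, k) be a noetherian commutative local ring and C an A-module (not necessarily finitely generated) with mC ≠ C. If Tor_1^A(C, k) = 0, then for every m-primary ideal I of A, the A/I-module C/IC is free and nonzero. -/
open CategoryTheory Limits IsLocalRing

/-- `Tor_n^A(C, D) = 0`. -/
def TorIsZero (A : Type) [CommRing A] (n : ℕ) (C D : Type)
    [AddCommGroup C] [Module A C] [AddCommGroup D] [Module A D] : Prop :=
  IsZero (((Tor (ModuleCat A) n).obj (ModuleCat.of A C)).obj (ModuleCat.of A D))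

open TensorProduct in
/-- Change of presentation: injectivity after tensoring descends along a pullback square. -/
lemma aux_change {A C X Y P : Type} [CommRing A] [AddCommGroup C] [Module A C]
    [AddCommGroup X] [Module A X] [AddCommGroup Y] [Module A Y] [AddCommGroup P] [Module A P]
    (i : X →ₗ[A] Y) (hi : Function.Injective i) (h : P →ₗ[A] Y)
    (hsurj : LinearMap.range i ⊔ LinearMap.range h = ⊤)
    (hK : Function.Injective (LinearMap.lTensor C ((LinearMap.range i).comap h).subtype)) :
    Function.Injective (LinearMap.lTensor C i) := by
  rw [injective_iff_map_eq_zero]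
  intro t ht
  set g : X × P →ₗ[A] Y := LinearMap.coprod i h with hg
  have hgs : Function.Surjective g := by
    rw [← LinearMap.range_eq_top, hg, LinearMap.range_coprod, hsurj]
  have hex : Function.Exact (LinearMap.ker g).subtype g := LinearMap.exact_subtype_ker_map g
  have hexT := lTensor_exact C hex hgs
  have hz : LinearMap.lTensor C g (LinearMap.lTensor C (LinearMap.inl A X P) t) = 0 := by
    rw [← LinearMap.lTensor_comp_apply, hg, LinearMap.coprod_inl, ht]
  obtain ⟨s, hs⟩ := (hexT _).1 hz
  let e0 : LinearMap.ker g →ₗ[A] ((LinearMap.range i).comap h) :=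
    LinearMap.codRestrict _ ((LinearMap.snd A X P).comp (LinearMap.ker g).subtype) (by
      rintro ⟨⟨x, p⟩, hxp⟩
      have hxp' : i x + h p = 0 := by simpa [hg] using hxp
      refine ⟨-x, ?_⟩
      simpa using neg_eq_of_add_eq_zero_right hxp')
  have he0 : Function.Bijective e0 := by
    constructor
    · rw [injective_iff_map_eq_zero]
      rintro ⟨⟨x, p⟩, hxp⟩ h0
      have hp : p = 0 := congrArg Subtype.val h0
      have hxp' : i x + h p = 0 := by simpa [hg] using hxp
      subst hp
      have : x = 0 := hi (by simpa using hxp')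
      subst this
      rfl
    · rintro ⟨p, x, hx⟩
      exact ⟨⟨(-x, p), by simp [hg, hx]⟩, rfl⟩
  have hsub : ((LinearMap.range i).comap h).subtype ∘ₗ e0 =
      (LinearMap.snd A X P).comp (LinearMap.ker g).subtype := rfl
  have h1 : LinearMap.lTensor C ((LinearMap.range i).comap h).subtype
      (LinearMap.lTensor C e0 s) = 0 := by
    rw [← LinearMap.lTensor_comp_apply, hsub, LinearMap.lTensor_comp_apply, hs,
      ← LinearMap.lTensor_comp_apply, LinearMap.snd_comp_inl]
    simp
  have h2 : LinearMap.lTensor C e0 s = 0 := (injective_iff_map_eq_zero _).1 hK _ h1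
  have h3 : s = 0 := by
    have := (LinearEquiv.lTensor C (LinearEquiv.ofBijective e0 he0)).injective
    exact (injective_iff_map_eq_zero _).1 this _ h2
  subst h3
  have h4 := congrArg (LinearMap.lTensor C (LinearMap.fst A X P)) hs
  rw [map_zero, map_zero, ← LinearMap.lTensor_comp_apply, LinearMap.fst_comp_inl] at h4
  simpa using h4.symm

open TensorProduct in
lemma aux_cover {A C P₂ P₁ P₀ : Type} [CommRing A] [AddCommGroup C] [Module A C]
    [AddCommGroup P₂] [Module A P₂] [AddCommGroup P₁] [Module A P₁] [AddCommGroup P₀] [Module A P₀]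
    (d₂ : P₂ →ₗ[A] P₁) (d₁ : P₁ →ₗ[A] P₀) (hd : d₁ ∘ₗ d₂ = 0) (K : Submodule A P₀)
    (hK : LinearMap.range d₁ = K)
    (hex : Function.Exact (LinearMap.lTensor C d₂) (LinearMap.lTensor C d₁)) :
    Function.Injective (LinearMap.lTensor C K.subtype) := by
  subst hK
  rw [injective_iff_map_eq_zero]
  intro z hz
  obtain ⟨w, rfl⟩ := LinearMap.lTensor_surjective C d₁.surjective_rangeRestrict z
  rw [← LinearMap.lTensor_comp_apply] at hz
  obtain ⟨v, rfl⟩ := (hex w).1 hz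
  rw [← LinearMap.lTensor_comp_apply]
  have : d₁.rangeRestrict ∘ₗ d₂ = 0 := by
    ext x
    exact LinearMap.congr_fun hd x
  rw [this]
  simp

lemma aux_tor {A C : Type} [CommRing A] [IsLocalRing A] [AddCommGroup C] [Module A C]
    (hTor : TorIsZero A 1 C (ResidueField A)) :
    Function.Injective (LinearMap.lTensor C (maximalIdeal A).subtype) := by
  let P := projectiveResolution (ModuleCat.of A (ResidueField A))
  let F := (MonoidalCategory.tensoringLeft (ModuleCat A)).obj (ModuleCat.of A C)
  have h0 : IsZero ((HomologicalComplex.homologyFunctor _ _ 1).obj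
      ((F.mapHomologicalComplex _).obj P.complex)) :=
    IsZero.of_iso hTor (P.isoLeftDerivedObj F 1).symm
  have h1 : ((F.mapHomologicalComplex (ComplexShape.down ℕ)).obj P.complex).ExactAt 1 := by
    rw [HomologicalComplex.exactAt_iff_isZero_homology]
    exact h0
  rw [HomologicalComplex.exactAt_iff' _ 2 1 0 (by simp) (by simp)] at h1
  have hex : Function.Exact (LinearMap.lTensor C (P.complex.d 2 1).hom)
      (LinearMap.lTensor C (P.complex.d 1 0).hom) :=
    (ShortComplex.ShortExact.moduleCat_exact_iff_function_exact _).1 h1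
  let π : P.complex.X 0 →ₗ[A] ResidueField A := (P.π.f 0).hom
  have hπ : Function.Surjective π := (ModuleCat.epi_iff_surjective _).1 inferInstance
  have hex0 : Function.Exact (P.complex.d 1 0).hom π :=
    (ShortComplex.ShortExact.moduleCat_exact_iff_function_exact _).1 P.exact₀
  have : Module.Projective A (P.complex.X 0) :=
    (IsProjective.iff_projective _).2 (P.projective 0)
  let r : A →ₗ[A] ResidueField A := Algebra.linearMap A (ResidueField A)
  have hr : Function.Surjective r := IsLocalRing.residue_surjective
  obtain ⟨h, hh⟩ := Module.projective_lifting_property r π hr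
  have hrk : ∀ a, r a = 0 ↔ a ∈ maximalIdeal A := fun a => IsLocalRing.residue_eq_zero_iff a
  have hhx : ∀ x, r (h x) = π x := fun x => LinearMap.congr_fun hh x
  refine aux_change (maximalIdeal A).subtype Subtype.val_injective h ?_ ?_
  · rw [eq_top_iff]
    intro a _
    obtain ⟨x, hx⟩ := hπ (r a)
    rw [Submodule.range_subtype]
    have : a - h x ∈ maximalIdeal A := by
      rw [← hrk, map_sub, hhx, hx, sub_self]
    rw [← sub_add_cancel a (h x)]
    exact Submodule.add_mem_sup this ⟨x, rfl⟩
  · refine aux_cover (P.complex.d 2 1).hom (P.complex.d 1 0).hom ?_ _ ?_ hex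
    · rw [← ModuleCat.hom_comp, P.complex.d_comp_d]
      rfl
    · rw [Submodule.range_subtype]
      ext x
      rw [Submodule.mem_comap, ← hrk, hhx]
      exact (hex0 x).symm

lemma aux_ideal {A C : Type} [CommRing A] [IsLocalRing A] [IsNoetherianRing A]
    [AddCommGroup C] [Module A C]
    (hm : Function.Injective (LinearMap.lTensor C (maximalIdeal A).subtype))
    (n : ℕ) (J : Ideal A) (hJ : maximalIdeal A ^ n ≤ J) :
    Function.Injective (LinearMap.lTensor C J.subtype) := by
  induction J using IsNoetherian.induction with
  | hgt J ih =>
  by_cases htop : J = ⊤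
  · subst htop
    exact (LinearEquiv.lTensor C (Submodule.topEquiv (R := A) (M := A))).injective
  -- find a socle element
  obtain ⟨a, haJ, ha⟩ : ∃ a, a ∉ J ∧ ∀ r ∈ maximalIdeal A, r * a ∈ J := by
    classical
    have hex : ∃ k, maximalIdeal A ^ k ≤ J := ⟨n, hJ⟩
    have hk := Nat.find_spec hex
    have hkpos : Nat.find hex ≠ 0 := by
      intro h0
      rw [h0, pow_zero, Ideal.one_eq_top, top_le_iff] at hk
      exact htop hk
    obtain ⟨l, hl⟩ := Nat.exists_eq_succ_of_ne_zero hkpos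
    have hlt := Nat.find_min hex (m := l) (by omega)
    obtain ⟨a, ha, haJ⟩ := Set.not_subset.1 hlt
    refine ⟨a, haJ, fun r hr => hk ?_⟩
    rw [hl, Nat.succ_eq_add_one, pow_succ']
    exact Ideal.mul_mem_mul hr ha
  set J' : Ideal A := J ⊔ Ideal.span {a} with hJ'
  have hle : J ≤ J' := le_sup_left
  have haJ' : a ∈ J' := (le_sup_right : _ ≤ J') (Ideal.mem_span_singleton_self a)
  have hlt : J < J' := lt_of_le_of_ne hle (fun h => haJ (h ▸ haJ'))
  have ihJ' := ih J' hlt (hJ.trans hle)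
  have key : Function.Injective (LinearMap.lTensor C (Submodule.inclusion hle)) := by
    let h : A →ₗ[A] J' := LinearMap.toSpanSingleton A J' ⟨a, haJ'⟩
    have hcomap : (LinearMap.range (Submodule.inclusion hle)).comap h = maximalIdeal A := by
      ext r
      have : r ∈ (LinearMap.range (Submodule.inclusion hle)).comap h ↔ r * a ∈ J := by
        rw [Submodule.mem_comap, Submodule.range_inclusion]
        rfl
      rw [this]
      refine ⟨fun hr => ?_, ha r⟩
      by_contra hu
      have hu' : IsUnit r := by simpa using hu
      exact haJ ((Ideal.unit_mul_mem_iff_mem J hu').1 hr)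
    refine aux_change _ (Submodule.inclusion_injective hle) h ?_ ?_
    · rw [eq_top_iff]
      rintro ⟨x, hx⟩ _
      obtain ⟨y, hy, z, hz, rfl⟩ := Submodule.mem_sup.1 hx
      obtain ⟨r, rfl⟩ := Ideal.mem_span_singleton'.1 hz
      exact Submodule.mem_sup.2 ⟨⟨y, hle hy⟩, ⟨⟨y, hy⟩, rfl⟩, h r, ⟨r, rfl⟩, rfl⟩
    · rw [hcomap]
      exact hm
  have hc : J.subtype = J'.subtype ∘ₗ Submodule.inclusion hle := rfl
  rw [hc, LinearMap.lTensor_comp]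
  exact ihJ'.comp key

open TensorProduct in
lemma aux_indep {A C : Type} [CommRing A] [IsLocalRing A] [IsNoetherianRing A]
    [AddCommGroup C] [Module A C]
    (n : ℕ) (I : Ideal A) (hI : maximalIdeal A ^ n ≤ I)
    (hinj : ∀ J : Ideal A, maximalIdeal A ^ n ≤ J →
      Function.Injective (LinearMap.lTensor C J.subtype))
    {ι : Type} (c : ι → C)
    (hc : LinearIndependent (A ⧸ maximalIdeal A)
      (fun i => (Submodule.Quotient.mk (c i) : C ⧸ maximalIdeal A • (⊤ : Submodule A C))))
    (s : Finset ι) (a : ι → A) (hsum : ∑ i ∈ s, a i • c i ∈ I • (⊤ : Submodule A C)) :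
    ∀ i ∈ s, a i ∈ I := by
  classical
  set J : Ideal A := I ⊔ Ideal.span (a '' s) with hJ
  have hIJ : I ≤ J := le_sup_left
  have haJ : ∀ i ∈ s, a i ∈ J := fun i hi =>
    (le_sup_right : _ ≤ J) (Ideal.subset_span ⟨i, hi, rfl⟩)
  by_contra hcon
  push Not at hcon
  obtain ⟨i₀, hi₀, hai₀⟩ := hcon
  have hne : (Submodule.comap J.subtype I) ≠ ⊤ := by
    intro h
    have : (⟨a i₀, haJ i₀ hi₀⟩ : J) ∈ (Submodule.comap J.subtype I) := by
      rw [h]; trivial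
    exact hai₀ this
  obtain ⟨M, hM, hIM⟩ := (eq_top_or_exists_le_coatom (Submodule.comap J.subtype I)).resolve_left hne
  have hsimple : IsSimpleModule A (J ⧸ M) := isSimpleModule_iff_isCoatom.2 hM
  obtain ⟨m', hm', ⟨e⟩⟩ := isSimpleModule_iff_quot_maximal.1 hsimple
  obtain rfl := IsLocalRing.eq_maximalIdeal hm'
  let lam : J →ₗ[A] A ⧸ maximalIdeal A := e.toLinearMap ∘ₗ M.mkQ
  have hlam : ∀ x, lam x = 0 ↔ x ∈ M := by
    intro x
    simp [lam]
  let Lam : C ⊗[A] J →ₗ[A] C ⧸ maximalIdeal A • (⊤ : Submodule A C) :=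
    TensorProduct.lift (LinearMap.mk₂ A
      (fun (x : C) (j : J) => lam j •
        (Submodule.Quotient.mk x : C ⧸ maximalIdeal A • (⊤ : Submodule A C)))
      (fun x y j => by rw [Submodule.Quotient.mk_add, smul_add])
      (fun r x j => by rw [Submodule.Quotient.mk_smul, smul_comm])
      (fun x j k => by rw [map_add, add_smul])
      (fun r x j => by rw [map_smul, smul_assoc]))
  have hLam : ∀ x j, Lam (x ⊗ₜ j) = lam j • Submodule.Quotient.mk x := fun x j => rfl
  obtain ⟨t, ht⟩ : ∃ t : C ⊗[A] I,
      TensorProduct.rid A C (LinearMap.lTensor C I.subtype t) = ∑ i ∈ s, a i • c i := by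
    refine Submodule.smul_induction_on hsum ?_ ?_
    · intro r hr x _
      exact ⟨x ⊗ₜ ⟨r, hr⟩, by simp⟩
    · rintro x y ⟨t, rfl⟩ ⟨u, rfl⟩
      exact ⟨t + u, by simp⟩
  let z : C ⊗[A] J := ∑ i ∈ s.attach, c i ⊗ₜ ⟨a i, haJ i i.2⟩
  have hz : z = LinearMap.lTensor C (Submodule.inclusion hIJ) t := by
    apply hinj J (hI.trans hIJ)
    apply (TensorProduct.rid A C).injective
    rw [← LinearMap.lTensor_comp_apply]
    refine Eq.trans ?_ ht.symm
    simp only [z, map_sum, LinearMap.lTensor_tmul, Submodule.subtype_apply,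
      TensorProduct.rid_tmul]
    exact Finset.sum_attach s (fun i => a i • c i)
  have hkill : Lam ∘ₗ LinearMap.lTensor C (Submodule.inclusion hIJ) = 0 := by
    ext x j
    have : lam (Submodule.inclusion hIJ j) = 0 := (hlam _).2 (hIM j.2)
    simp [hLam, this]
  have hLz : Lam z = 0 := by
    rw [hz]
    exact LinearMap.congr_fun hkill t
  have hall : ∀ i : s, lam ⟨a i, haJ i i.2⟩ = 0 := by
    have hc' := hc.comp (fun i : s => (i : ι)) Subtype.val_injective
    rw [Fintype.linearIndependent_iff] at hc'
    apply hc' (fun i => lam ⟨a i, haJ i i.2⟩)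
    rw [← hLz]
    simp only [z, map_sum, hLam]
    rfl
  apply hM.1
  have hle : J ≤ M.map J.subtype := by
    refine sup_le (a := I) ?_ (Ideal.span_le.2 ?_)
    · intro x hx
      exact ⟨⟨x, hIJ hx⟩, hIM (show x ∈ I from hx), rfl⟩
    · rintro _ ⟨i, hi, rfl⟩
      exact ⟨⟨a i, haJ i hi⟩, (hlam _).1 (hall ⟨i, hi⟩), rfl⟩
  rw [eq_top_iff]
  rintro ⟨x, hx⟩ _
  obtain ⟨y, hy, hyx⟩ := hle hx
  have : y = ⟨x, hx⟩ := Subtype.ext hyx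
  exact this ▸ hy

lemma aux_span {A C : Type} [CommRing A] [AddCommGroup C] [Module A C] (m : Ideal A)
    (N : Submodule A C) (h : N ⊔ m • ⊤ = ⊤) (n : ℕ) : N ⊔ m ^ n • ⊤ = ⊤ := by
  induction n with
  | zero => simp
  | succ n ih =>
    rw [eq_top_iff]
    have h1 : m ^ n • (⊤ : Submodule A C) ≤ N ⊔ m ^ (n + 1) • ⊤ := by
      conv_lhs => rw [← h]
      rw [Submodule.smul_sup, pow_succ, mul_smul]
      exact sup_le_sup Submodule.smul_le_right le_rfl
    calc ⊤ = N ⊔ m ^ n • ⊤ := ih.symm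
      _ ≤ _ := sup_le le_sup_left h1

/-- If `(A, m, k)` is a noetherian local ring and `C` is an `A`-module with `mC ≠ C` and
`Tor_1^A(C, k) = 0`, then for every `m`-primary ideal `I`, the `A/I`-module `C/IC` is
free and nonzero. -/
theorem quotient_free_of_tor_vanishing
    (A : Type) [CommRing A] [IsLocalRing A] [IsNoetherianRing A]
    (C : Type) [AddCommGroup C] [Module A C]
    (hmC : maximalIdeal A • (⊤ : Submodule A C) ≠ ⊤)
    (hTor : TorIsZero A 1 C (ResidueField A))
    (I : Ideal A) (hIm : I ≤ maximalIdeal A) (hmI : ∃ n : ℕ, maximalIdeal A ^ n ≤ I) :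
    Module.Free (A ⧸ I) (C ⧸ I • (⊤ : Submodule A C)) ∧
      Nontrivial (C ⧸ I • (⊤ : Submodule A C)) := by
  obtain ⟨n, hn⟩ := hmI
  have hinj := aux_ideal (aux_tor hTor) n
  constructor
  · obtain ⟨ι, ⟨b⟩⟩ : ∃ ι : Type, Nonempty (Module.Basis ι (A ⧸ maximalIdeal A)
        (C ⧸ maximalIdeal A • (⊤ : Submodule A C))) := by
      let _ := Ideal.Quotient.field (maximalIdeal A)
      exact ⟨_, ⟨Module.Basis.ofVectorSpace (A ⧸ maximalIdeal A)
        (C ⧸ maximalIdeal A • (⊤ : Submodule A C))⟩⟩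
    choose c hc using fun i => Submodule.Quotient.mk_surjective _ (b i)
    have hli : LinearIndependent (A ⧸ maximalIdeal A)
      (fun i => (Submodule.Quotient.mk (c i) : C ⧸ maximalIdeal A • (⊤ : Submodule A C))) := by
      simp only [hc]
      exact b.linearIndependent
    have hspan : Submodule.span A (Set.range c) ⊔ maximalIdeal A • ⊤ = ⊤ := by
      rw [eq_top_iff]
      intro x _
      have hx := b.mem_span (Submodule.Quotient.mk x)
      obtain ⟨f, hf⟩ := (Finsupp.mem_span_range_iff_exists_finsupp).1 hx
      choose g hg using fun i => Ideal.Quotient.mk_surjective (f i)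
      set y := f.sum (fun i _ => g i • c i) with hy
      have hymem : y ∈ Submodule.span A (Set.range c) :=
        Submodule.sum_mem _ fun i _ => Submodule.smul_mem _ _ (Submodule.subset_span ⟨i, rfl⟩)
      have hxy : x - y ∈ maximalIdeal A • (⊤ : Submodule A C) := by
        rw [← Submodule.Quotient.eq, ← hf, hy]
        rw [← Submodule.mkQ_apply, Finsupp.sum, Finsupp.sum, map_sum]
        refine Finset.sum_congr rfl fun i _ => ?_
        rw [map_smul, Submodule.mkQ_apply, hc, ← hg]
        rfl
      rw [← add_sub_cancel y x]
      exact Submodule.add_mem_sup hymem hxy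
    have hspanI : Submodule.span A (Set.range c) ⊔ I • ⊤ = ⊤ := by
      refine top_le_iff.1 ((aux_span _ _ hspan n).symm.le.trans ?_)
      exact sup_le_sup le_rfl (Submodule.smul_mono_left hn)
    refine Module.Free.of_basis (Module.Basis.mk
      (v := fun i => (Submodule.Quotient.mk (c i) : C ⧸ I • (⊤ : Submodule A C))) ?_ ?_)
    · rw [linearIndependent_iff']
      intro s g hg i hi
      choose a ha using fun i => Ideal.Quotient.mk_surjective (g i)
      have hsum : ∑ i ∈ s, a i • c i ∈ I • (⊤ : Submodule A C) := by
        refine (Submodule.Quotient.mk_eq_zero _).1 (Eq.trans ?_ hg)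
        rw [← Submodule.mkQ_apply, map_sum]
        refine Finset.sum_congr rfl fun i _ => ?_
        rw [map_smul, Submodule.mkQ_apply, ← ha]
        rfl
      rw [← ha, Ideal.Quotient.eq_zero_iff_mem]
      exact aux_indep n I hn hinj c hli s a hsum i hi
    · intro x _
      obtain ⟨x, rfl⟩ := Submodule.Quotient.mk_surjective _ x
      have hx : x ∈ Submodule.span A (Set.range c) ⊔ I • ⊤ := by rw [hspanI]; trivial
      obtain ⟨y, hy, w, hw, rfl⟩ := Submodule.mem_sup.1 hx
      rw [Submodule.Quotient.mk_add, (Submodule.Quotient.mk_eq_zero _).2 hw, add_zero]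
      clear hx
      induction hy using Submodule.span_induction with
      | mem x h =>
        obtain ⟨i, rfl⟩ := h
        exact Submodule.subset_span ⟨i, rfl⟩
      | zero => exact Submodule.zero_mem _
      | add x y _ _ h1 h2 => exact Submodule.add_mem _ (h1 trivial) (h2 trivial)
      | smul r x _ h => exact Submodule.smul_mem _ (Ideal.Quotient.mk I r) (h trivial)
  · rw [Submodule.Quotient.nontrivial_iff]
    intro h
    apply hmC
    exact top_le_iff.1 (h.symm.le.trans (Submodule.smul_mono_left hIm))
end

section
/- Let (A, m, k) be a noetherian commutative local ring and C an A-module with mC ≠ C and Tor_1^A(C, k) = 0. Then for every ideal I of A, the conductor (IC :_A C) = {r ∈ A : rC ⊆ IC} equals I. -/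
open CategoryTheory Limits IsLocalRing

open TensorProduct

/-- A short exact sequence `L → M → K` stays injective after tensoring with `C`, given the
beginning of a projective resolution of `K` which stays exact in degree one. -/
lemma aux_lTensor_injective {A : Type} [CommRing A] {C P2 P1 P0 K L M : Type}
    [AddCommGroup C] [Module A C] [AddCommGroup P2] [Module A P2] [AddCommGroup P1] [Module A P1]
    [AddCommGroup P0] [Module A P0] [AddCommGroup K] [Module A K] [AddCommGroup L] [Module A L]
    [AddCommGroup M] [Module A M] [Module.Projective A P0]
    (d2 : P2 →ₗ[A] P1) (d1 : P1 →ₗ[A] P0) (p : P0 →ₗ[A] K)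
    (h21 : d1 ∘ₗ d2 = 0) (h10 : Function.Exact d1 p) (hp : Function.Surjective p)
    (hT : Function.Exact (d2.lTensor C) (d1.lTensor C))
    (i : L →ₗ[A] M) (q : M →ₗ[A] K) (hi : Function.Injective i) (hiq : Function.Exact i q)
    (hq : Function.Surjective q) : Function.Injective (i.lTensor C) := by
  obtain ⟨f0, hf0⟩ := Module.projective_lifting_property q p hq
  have hr : ∀ x, (f0 ∘ₗ d1) x ∈ LinearMap.range i := by
    intro x
    obtain ⟨y, hy⟩ := (hiq (f0 (d1 x))).1 (by
      rw [← LinearMap.comp_apply, hf0]; exact h10.apply_apply_eq_zero x)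
    exact ⟨y, hy⟩
  let e := LinearEquiv.ofInjective i hi
  let f1 : P1 →ₗ[A] L := e.symm.toLinearMap ∘ₗ (f0 ∘ₗ d1).codRestrict _ hr
  have hf1 : ∀ x, i (f1 x) = f0 (d1 x) := by
    intro x
    have : (e (f1 x) : M) = f0 (d1 x) := by simp [f1]
    exact this
  have hf12 : f1 ∘ₗ d2 = 0 := by
    ext z
    apply hi
    have := LinearMap.congr_fun h21 z
    simp at this
    simp [hf1, this]
  let α : P1 →ₗ[A] L × P0 := f1.prod (-d1)
  let β : L × P0 →ₗ[A] M := i.coprod f0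
  have hβ : Function.Surjective β := by
    intro m
    obtain ⟨x, hx⟩ := hp (q m)
    obtain ⟨l, hl⟩ := (hiq (m - f0 x)).1 (by
      rw [map_sub, ← LinearMap.comp_apply q f0, hf0, hx, sub_self])
    exact ⟨(l, x), by simp [β, hl]⟩
  have hαβ : Function.Exact α β := by
    rintro ⟨l, x⟩
    constructor
    · intro h
      have h : i l + f0 x = 0 := by simpa [β] using h
      have hx : p x = 0 := by
        rw [← hf0, LinearMap.comp_apply, eq_neg_of_add_eq_zero_right h, map_neg,
          hiq.apply_apply_eq_zero, neg_zero]
      obtain ⟨y, hy⟩ := (h10 x).1 hx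
      refine ⟨-y, ?_⟩
      refine Prod.ext (hi ?_) (by simp [α, hy])
      change i (f1 (-y)) = i l
      rw [map_neg, map_neg, hf1, hy, eq_neg_of_add_eq_zero_left h]
    · rintro ⟨y, hy⟩
      have hy1 : f1 y = l := congrArg Prod.fst hy
      have hy2 : -d1 y = x := congrArg Prod.snd hy
      simp [β, ← hy1, ← hy2, hf1]
  have hex := lTensor_exact C hαβ hβ
  rw [injective_iff_map_eq_zero]
  intro x hx
  obtain ⟨y, hy⟩ := (hex ((LinearMap.inl A L P0).lTensor C x)).1 (by
    rw [← LinearMap.comp_apply, ← LinearMap.lTensor_comp]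
    simpa [β] using hx)
  have h1 : f1.lTensor C y = x := by
    have := congrArg ((LinearMap.fst A L P0).lTensor C) hy
    rw [← LinearMap.comp_apply, ← LinearMap.lTensor_comp, ← LinearMap.comp_apply,
      ← LinearMap.lTensor_comp] at this
    simpa [α] using this
  have h2 : d1.lTensor C y = 0 := by
    have := congrArg ((LinearMap.snd A L P0).lTensor C) hy
    rw [← LinearMap.comp_apply, ← LinearMap.lTensor_comp, ← LinearMap.comp_apply,
      ← LinearMap.lTensor_comp] at this
    simpa [α] using this
  obtain ⟨z, rfl⟩ := (hT y).1 h2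
  rw [← h1, ← LinearMap.comp_apply, ← LinearMap.lTensor_comp, hf12]
  simp

lemma aux_tor_s2 {A : Type} [CommRing A] {C K L M : Type}
    [AddCommGroup C] [Module A C] [AddCommGroup K] [Module A K] [AddCommGroup L] [Module A L]
    [AddCommGroup M] [Module A M] (hTor : TorIsZero A 1 C K)
    (i : L →ₗ[A] M) (q : M →ₗ[A] K) (hi : Function.Injective i) (hiq : Function.Exact i q)
    (hq : Function.Surjective q) : Function.Injective (i.lTensor C) := by
  let P := projectiveResolution (ModuleCat.of A K)
  let F := (MonoidalCategory.tensoringLeft (ModuleCat A)).obj (ModuleCat.of A C)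
  have h1 : IsZero ((F.leftDerived 1).obj (ModuleCat.of A K)) := hTor
  have h2 := h1.of_iso (P.isoLeftDerivedObj F 1).symm
  have h3 : ((F.mapHomologicalComplex _).obj P.complex).ExactAt 1 := by
    rw [HomologicalComplex.exactAt_iff_isZero_homology]
    exact h2
  rw [HomologicalComplex.exactAt_iff' _ 2 1 0 (by simp) (by simp)] at h3
  rw [ShortComplex.ShortExact.moduleCat_exact_iff_function_exact] at h3
  have h10 := (ShortComplex.ShortExact.moduleCat_exact_iff_function_exact _).1 P.exact₀
  have hp : Function.Surjective (P.π.f 0) := (ModuleCat.epi_iff_surjective _).1 inferInstance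
  have h21 : (P.complex.d 1 0).hom ∘ₗ (P.complex.d 2 1).hom = 0 := by
    rw [← ModuleCat.hom_comp, P.complex.d_comp_d]; rfl
  have : Module.Projective A (P.complex.X 0) :=
    (IsProjective.iff_projective (P.complex.X 0)).2 (P.projective 0)
  exact aux_lTensor_injective (P.complex.d 2 1).hom (P.complex.d 1 0).hom (P.π.f 0).hom
    h21 h10 hp h3 i q hi hiq hq

lemma aux_map {A : Type} [CommRing A] [IsLocalRing A] (I : Ideal A) (r : A) (hr : r ∉ I)
    (hm : ∀ a ∈ maximalIdeal A, a * r ∈ I) :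
    ∃ q : ↥(I ⊔ Ideal.span {r}) →ₗ[A] ResidueField A,
      (∀ x, q x = 0 ↔ (x : A) ∈ I) ∧ ∀ x : ↥(I ⊔ Ideal.span {r}), (x : A) = r → q x = 1 := by
  have hex : ∀ x : ↥(I ⊔ Ideal.span {r}), ∃ a : A, (x : A) - a * r ∈ I := by
    rintro ⟨x, hx⟩
    obtain ⟨y, hy, z, hz, rfl⟩ := Submodule.mem_sup.1 hx
    obtain ⟨a, rfl⟩ := Ideal.mem_span_singleton'.1 hz
    exact ⟨a, by simpa using hy⟩
  choose f hf using hex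
  have hu : ∀ (x : ↥(I ⊔ Ideal.span {r})) (a : A), (x : A) - a * r ∈ I →
      residue A (f x) = residue A a := by
    intro x a ha
    rw [← sub_eq_zero, ← map_sub, residue_eq_zero_iff]
    by_contra hn
    have hun : IsUnit (f x - a) := by simpa using hn
    have h := I.sub_mem ha (hf x)
    have h' : (f x - a) * r ∈ I := by convert h using 1; ring
    exact hr ((Ideal.unit_mul_mem_iff_mem I hun).1 h')
  refine ⟨{ toFun := fun x => residue A (f x), map_add' := ?_, map_smul' := ?_ }, ?_, ?_⟩
  · intro x y
    rw [← map_add]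
    apply hu
    convert I.add_mem (hf x) (hf y) using 1
    push_cast; ring
  · intro a x
    have : residue A (f (a • x)) = residue A (a * f x) := by
      apply hu
      convert I.mul_mem_left a (hf x) using 1
      push_cast; simp only [smul_eq_mul]; ring
    rw [this, map_mul]
    simp [Algebra.smul_def]
  · intro x
    change residue A (f x) = 0 ↔ _
    constructor
    · intro h
      rw [residue_eq_zero_iff] at h
      simpa using I.add_mem (hf x) (hm _ h)
    · intro h
      rw [hu x 0 (by simpa using h), map_zero]
  · intro x hx
    change residue A (f x) = 1
    rw [hu x 1 (by simp [hx]), map_one]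

lemma aux_socle {A : Type} [CommRing A] (m I : Ideal A) (n : ℕ) (hn : m ^ n ≤ I) (r : A)
    (hr : r ∉ I) : ∃ b, b * r ∉ I ∧ ∀ a ∈ m, a * (b * r) ∈ I := by
  classical
  have hex : ∃ n, ∀ b ∈ m ^ n, b * r ∈ I := ⟨n, fun b hb => I.mul_mem_right _ (hn hb)⟩
  have hs := Nat.find_spec hex
  have hmin := fun k => Nat.find_min hex (m := k)
  rcases hk : Nat.find hex with _ | k
  · rw [hk] at hs
    exact absurd (by simpa using hs 1 (by simp)) hr
  · have := hmin k (by omega)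
    push Not at this
    obtain ⟨b, hb, hbr⟩ := this
    refine ⟨b, hbr, fun a ha => ?_⟩
    rw [← mul_assoc]
    apply hs
    rw [hk, pow_succ']
    exact Ideal.mul_mem_mul ha hb

lemma aux_inj {A : Type} [CommRing A] [IsLocalRing A] [IsNoetherianRing A]
    {C : Type} [AddCommGroup C] [Module A C] (hTor : TorIsZero A 1 C (ResidueField A))
    (n : ℕ) (J : Ideal A) : maximalIdeal A ^ n ≤ J →
      Function.Injective ((Submodule.subtype J).lTensor C) := by
  induction J using IsNoetherian.induction with
  | hgt J ih =>
  intro hn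
  by_cases hJ : J = ⊤
  · subst hJ
    exact (LinearEquiv.lTensor C (Submodule.topEquiv (R := A) (M := A))).injective
  obtain ⟨b, hb, hbm⟩ := aux_socle (maximalIdeal A) J n hn 1 (by rwa [← Ideal.ne_top_iff_one])
  rw [mul_one] at hb hbm
  obtain ⟨q, hq0, hq1⟩ := aux_map J b hb hbm
  have hlt : J < J ⊔ Ideal.span {b} := by
    refine lt_of_le_of_ne le_sup_left fun h => hb ?_
    rw [h]
    exact Ideal.mem_sup_right (Ideal.mem_span_singleton_self b)
  have h1 := ih _ hlt (hn.trans hlt.le)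
  have hq : Function.Surjective q := by
    intro y
    obtain ⟨a, rfl⟩ := residue_surjective y
    refine ⟨a • ⟨b, Ideal.mem_sup_right (Ideal.mem_span_singleton_self b)⟩, ?_⟩
    rw [map_smul, hq1 _ rfl]
    simp [Algebra.smul_def]
  have h2 := aux_tor_s2 hTor (Submodule.inclusion hlt.le) q (Submodule.inclusion_injective _)
    (by
      intro x
      rw [hq0]
      constructor
      · intro h; exact ⟨⟨x, h⟩, rfl⟩
      · rintro ⟨y, rfl⟩; exact y.2) hq
  rw [← Submodule.subtype_comp_inclusion _ _ hlt.le, LinearMap.lTensor_comp, LinearMap.coe_comp]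
  exact h1.comp h2

lemma aux_lift {A : Type} [CommRing A] {C : Type} [AddCommGroup C] [Module A C] (I : Ideal A)
    (y : C) (hy : y ∈ I • (⊤ : Submodule A C)) :
    ∃ z : C ⊗[A] I, I.subtype.lTensor C z = y ⊗ₜ 1 := by
  induction hy using Submodule.smul_induction_on' with
  | smul a ha c _ => exact ⟨c ⊗ₜ ⟨a, ha⟩, by simp [TensorProduct.smul_tmul]⟩
  | add x _ y _ hx hy =>
    obtain ⟨u, hu⟩ := hx
    obtain ⟨v, hv⟩ := hy
    exact ⟨u + v, by rw [map_add, hu, hv, TensorProduct.add_tmul]⟩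

lemma aux_primary {A : Type} [CommRing A] [IsLocalRing A] [IsNoetherianRing A]
    {C : Type} [AddCommGroup C] [Module A C]
    (hmC : maximalIdeal A • (⊤ : Submodule A C) ≠ ⊤)
    (hTor : TorIsZero A 1 C (ResidueField A))
    (I : Ideal A) (n : ℕ) (hn : maximalIdeal A ^ n ≤ I) (r : A)
    (h : ∀ c : C, r • c ∈ I • (⊤ : Submodule A C)) : r ∈ I := by
  by_contra hr
  obtain ⟨b, hb, hbm⟩ := aux_socle _ I n hn r hr
  obtain ⟨q, hq0, hq1⟩ := aux_map I _ hb hbm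
  have hinj := aux_inj hTor n (I ⊔ Ideal.span {b * r}) (hn.trans le_sup_left)
  apply hmC
  have hz : ∀ c : C, c ⊗ₜ[A] (1 : ResidueField A) = 0 := by
    intro c
    obtain ⟨z, hz⟩ := aux_lift I ((b * r) • c) (by
      rw [mul_smul]; exact Submodule.smul_mem _ _ (h c))
    have hle : I ≤ I ⊔ Ideal.span {b * r} := le_sup_left
    let s : ↥(I ⊔ Ideal.span {b * r}) :=
      ⟨b * r, Ideal.mem_sup_right (Ideal.mem_span_singleton_self _)⟩
    have key : (Submodule.inclusion hle).lTensor C z = c ⊗ₜ s := by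
      apply hinj
      rw [← LinearMap.comp_apply, ← LinearMap.lTensor_comp, Submodule.subtype_comp_inclusion, hz,
        LinearMap.lTensor_tmul, TensorProduct.smul_tmul]
      simp [s]
    have hc : q ∘ₗ Submodule.inclusion hle = 0 := by
      ext x
      exact (hq0 _).2 x.2
    have := congrArg (q.lTensor C) key
    rw [← LinearMap.comp_apply, ← LinearMap.lTensor_comp, hc, LinearMap.lTensor_tmul,
      hq1 s rfl] at this
    simpa using this.symm
  rw [eq_top_iff]
  intro c _
  have hc : c ⊗ₜ[A] (Ideal.Quotient.mk (maximalIdeal A) 1) = 0 := hz c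
  have := congrArg (TensorProduct.tensorQuotEquivQuotSMul C (maximalIdeal A)) hc
  rw [map_zero, TensorProduct.tensorQuotEquivQuotSMul_tmul_mk, one_smul] at this
  exact (Submodule.Quotient.mk_eq_zero _).1 this

lemma aux_krull {A : Type} [CommRing A] [IsLocalRing A] [IsNoetherianRing A] (I : Ideal A) (r : A)
    (h : ∀ n, r ∈ I ⊔ maximalIdeal A ^ n) : r ∈ I := by
  have hk := Ideal.iInf_pow_smul_eq_bot_of_isLocalRing (M := A ⧸ I) (maximalIdeal A)
    (maximalIdeal.isMaximal A).ne_top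
  have : I.mkQ r ∈ (⨅ n : ℕ, maximalIdeal A ^ n • (⊤ : Submodule A (A ⧸ I))) := by
    rw [Submodule.mem_iInf]
    intro n
    obtain ⟨y, hy, z, hz, rfl⟩ := Submodule.mem_sup.1 (h n)
    have hy0 : I.mkQ y = 0 := by simpa [Ideal.Quotient.eq_zero_iff_mem] using hy
    rw [map_add, hy0, zero_add, ← mul_one z, ← smul_eq_mul, map_smul]
    exact Submodule.smul_mem_smul hz trivial
  rw [hk, Submodule.mem_bot] at this
  exact (Submodule.Quotient.mk_eq_zero I).1 this

/-- If `(A, m, k)` is a noetherian local ring and `C` an `A`-module with `mC ≠ C` and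
`Tor_1^A(C, k) = 0`, then for every ideal `I` the conductor `(IC :_A C)` equals `I`. -/
theorem conductor_eq_of_tor_vanishing
    (A : Type) [CommRing A] [IsLocalRing A] [IsNoetherianRing A]
    (C : Type) [AddCommGroup C] [Module A C]
    (hmC : maximalIdeal A • (⊤ : Submodule A C) ≠ ⊤)
    (hTor : TorIsZero A 1 C (ResidueField A))
    (I : Ideal A) :
    (I • (⊤ : Submodule A C)).colon ⊤ = I := by
  apply le_antisymm
  · intro r hr
    have hr' : ∀ c : C, r • c ∈ I • (⊤ : Submodule A C) := fun c =>
      Submodule.mem_colon.1 hr c trivial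
    refine aux_krull I r fun n => ?_
    exact aux_primary hmC hTor _ n le_sup_right r fun c =>
      Submodule.smul_mono_left le_sup_left (hr' c)
  · intro r hr
    exact Submodule.mem_colon.2 fun c _ => Submodule.smul_mem_smul hr trivial
end

section
/- Let (A, m, k) be an artinian commutative local ring and C an A-module (not necessarily finitely generated). If Tor_1^A(C, k) = 0, then C is a free A-module. -/
open CategoryTheory Limits IsLocalRing

open scoped TensorProduct in
/-- Vanishing of `Tor_1(C, D)` gives a flat presentation of `D` that stays exact under `C ⊗ -`. -/
lemma exists_pres_of_torIsZero (A : Type) [CommRing A] (C D : Type)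
    [AddCommGroup C] [Module A C] [AddCommGroup D] [Module A D] (h : TorIsZero A 1 C D) :
    ∃ (P : ModuleCat.{0} A) (p : P →ₗ[A] D), Module.Projective A P ∧ Function.Surjective p ∧
      Function.Injective ((LinearMap.ker p).subtype.lTensor C) := by
  let P := ProjectiveResolution.of (ModuleCat.of A D)
  let F := (MonoidalCategory.tensoringLeft (ModuleCat.{0} A)).obj (ModuleCat.of A C)
  have h1 : IsZero (((F.mapHomologicalComplex _).obj P.complex).homology 1) :=
    IsZero.of_iso h (P.isoLeftDerivedObj F 1).symm
  rw [← HomologicalComplex.exactAt_iff_isZero_homology,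
    HomologicalComplex.exactAt_iff' _ 2 1 0 (by simp) (by simp),
    ShortComplex.moduleCat_exact_iff] at h1
  have h1' : ∀ x : C ⊗[A] (P.complex.X 1), (P.complex.d 1 0).hom.lTensor C x = 0 →
      ∃ y : C ⊗[A] (P.complex.X 2), (P.complex.d 2 1).hom.lTensor C y = x := h1
  have h0 := P.exact₀
  rw [ShortComplex.moduleCat_exact_iff] at h0
  let p : P.complex.X 0 →ₗ[A] D := (P.π.f 0).hom
  have h0' : ∀ x, p x = 0 → ∃ y, (P.complex.d 1 0).hom y = x := h0
  have hs : Function.Surjective p := (ModuleCat.epi_iff_surjective (P.π.f 0)).1 inferInstance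
  have hz : ∀ y, p ((P.complex.d 1 0).hom y) = 0 := fun y =>
    LinearMap.congr_fun (congrArg ModuleCat.Hom.hom P.complex_d_comp_π_f_zero) y
  refine ⟨P.complex.X 0, p, ?_, hs, ?_⟩
  · exact (IsProjective.iff_projective _).2 (P.projective 0)
  · rw [injective_iff_map_eq_zero]
    intro x hx
    let q : P.complex.X 1 →ₗ[A] LinearMap.ker p := (P.complex.d 1 0).hom.codRestrict _ hz
    have hq : Function.Surjective q := fun x => by
      obtain ⟨y, hy⟩ := h0' x.1 x.2
      exact ⟨y, Subtype.ext hy⟩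
    obtain ⟨y, rfl⟩ := LinearMap.lTensor_surjective C hq x
    rw [← LinearMap.comp_apply, ← LinearMap.lTensor_comp] at hx
    obtain ⟨z, rfl⟩ := h1' y hx
    rw [← LinearMap.comp_apply, ← LinearMap.lTensor_comp]
    have : q ∘ₗ (P.complex.d 2 1).hom = 0 := by
      ext w
      exact LinearMap.congr_fun (congrArg ModuleCat.Hom.hom (P.complex.d_comp_d 2 1 0)) w
    rw [this]; simp

open scoped TensorProduct in
lemma lTensor_ker_injective (A : Type) [CommRing A] (C D : Type)
    [AddCommGroup C] [Module A C] [AddCommGroup D] [Module A D] (h : TorIsZero A 1 C D)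
    {F : Type} [AddCommGroup F] [Module A F] (i : F →ₗ[A] C)
    (hi : Function.Surjective i) :
    Function.Injective ((LinearMap.ker i).subtype.lTensor D) := by
  obtain ⟨P, p, hP, hp, hinj⟩ := exists_pres_of_torIsZero A C D h
  refine lTensor_injective_of_exact_of_exact_of_rTensor_injective
      (LinearMap.exact_subtype_ker_map p) hp (LinearMap.exact_subtype_ker_map i) hi
      ((LinearMap.lTensor_inj_iff_rTensor_inj _ _).mp hinj) ?_
  exact Module.Flat.lTensor_preserves_injective_linearMap _ Subtype.val_injective

lemma nakayama_nilpotent {A : Type} [CommRing A] {M : Type} [AddCommGroup M] [Module A M]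
    (I : Ideal A) (hI : IsNilpotent I) (N : Submodule A M)
    (h : ⊤ ≤ N ⊔ I • (⊤ : Submodule A M)) : N = ⊤ := by
  have key : ∀ n : ℕ, ⊤ ≤ N ⊔ I ^ n • (⊤ : Submodule A M) := by
    intro n
    induction n with
    | zero => simp
    | succ n ih =>
      refine ih.trans (sup_le le_sup_left ?_)
      calc I ^ n • (⊤ : Submodule A M) ≤ I ^ n • (N ⊔ I • (⊤ : Submodule A M)) :=
            smul_mono_right _ h
        _ ≤ _ := by
            rw [Submodule.smul_sup, pow_succ, Submodule.mul_smul]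
            exact sup_le_sup_right Submodule.smul_le_right _
  obtain ⟨n, hn⟩ := hI
  have := key n
  rw [hn] at this
  simpa using this

open scoped TensorProduct in
/-- Over an artinian local ring, a module with `Tor_1^A(C, k) = 0` is free. -/
theorem free_of_tor_vanishing_artinian
    (A : Type) [CommRing A] [IsLocalRing A] [IsArtinianRing A]
    (C : Type) [AddCommGroup C] [Module A C]
    (hTor : TorIsZero A 1 C (ResidueField A)) :
    Module.Free A C := by
  have hnil : IsNilpotent (maximalIdeal A) := by
    rw [← jacobson_eq_maximalIdeal ⊥ bot_ne_top]
    exact IsArtinianRing.isNilpotent_jacobson_bot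
  obtain ⟨⟨ι, b⟩⟩ := (Module.Free.exists_basis (R := ResidueField A)
    (M := ResidueField A ⊗[A] C))
  obtain ⟨v, hv⟩ := (TensorProduct.mk_surjective A C (ResidueField A)
    Ideal.Quotient.mk_surjective).comp_left b
  have hv' : ∀ j, (1 : ResidueField A) ⊗ₜ[A] v j = b j := fun j => congrFun hv j
  have hker : ∀ (M : Type) [AddCommGroup M] [Module A M] (x : M),
      (1 : ResidueField A) ⊗ₜ[A] x = 0 → x ∈ maximalIdeal A • (⊤ : Submodule A M) := by
    intro M _ _ x hx
    rw [← LinearMap.ker_tensorProductMk]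
    exact hx
  let i := Finsupp.linearCombination A v
  have hi : Function.Surjective i := by
    rw [← LinearMap.range_eq_top]
    refine nakayama_nilpotent _ hnil _ ?_
    intro c _
    obtain ⟨w, hw⟩ : ∃ w, (1 : ResidueField A) ⊗ₜ[A] c = (1 : ResidueField A) ⊗ₜ[A] i w := by
      have gen : ∀ c : ι →₀ ResidueField A,
          ∃ w, Finsupp.linearCombination (ResidueField A) b c
            = (1 : ResidueField A) ⊗ₜ[A] i w := by
        intro c
        induction c using Finsupp.induction_linear with
        | zero => exact ⟨0, by rw [map_zero, map_zero, TensorProduct.tmul_zero]⟩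
        | add f g hf hg =>
          obtain ⟨w, hw⟩ := hf
          obtain ⟨u, hu⟩ := hg
          exact ⟨w + u, by rw [map_add, map_add, TensorProduct.tmul_add, hw, hu]⟩
        | single j r =>
          obtain ⟨s, rfl⟩ := IsLocalRing.residue_surjective r
          refine ⟨Finsupp.single j s, ?_⟩
          rw [Finsupp.linearCombination_single, Finsupp.linearCombination_single,
            TensorProduct.tmul_smul, hv', ← algebraMap_smul (ResidueField A) s (b j)]
          rfl
      obtain ⟨w, hw⟩ := gen (b.repr (1 ⊗ₜ[A] c))
      exact ⟨w, by rw [← hw, b.linearCombination_repr]⟩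
    rw [← sub_eq_zero, ← TensorProduct.tmul_sub] at hw
    have := hker C _ hw
    rw [← add_sub_cancel (i w) c]
    exact Submodule.add_mem_sup ⟨w, rfl⟩ this
  have hK : Function.Injective ((LinearMap.ker i).subtype.lTensor (ResidueField A)) :=
    lTensor_ker_injective A C (ResidueField A) hTor i hi
  have hbot : (⊥ : Submodule A (LinearMap.ker i)) = ⊤ := by
    refine nakayama_nilpotent (A := A) (M := LinearMap.ker i) (maximalIdeal A) hnil ⊥ ?_
    rintro x -
    rw [bot_sup_eq]
    apply hker
    apply hK
    rw [map_zero, LinearMap.lTensor_tmul, Submodule.subtype_apply]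
    have hx : i x.1 = 0 := x.2
    have h2 : (1 : ResidueField A) ⊗ₜ[A] i x.1 = 0 := by rw [hx, TensorProduct.tmul_zero]
    have hz : ∀ j, algebraMap A (ResidueField A) (x.1 j) = 0 := by
      have h3 : ∑ j ∈ x.1.support, algebraMap A (ResidueField A) (x.1 j) • b j = 0 := by
        rw [← h2, Finsupp.linearCombination_apply, Finsupp.sum, TensorProduct.tmul_sum]
        refine Finset.sum_congr rfl fun j _ => ?_
        rw [TensorProduct.tmul_smul, hv', algebraMap_smul]
      intro j
      by_cases hj : j ∈ x.1.support
      · exact linearIndependent_iff'.1 b.linearIndependent _ _ h3 j hj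
      · rw [Finsupp.notMem_support_iff.1 hj, map_zero]
    rw [← Finsupp.sum_single x.1, Finsupp.sum, TensorProduct.tmul_sum]
    refine Finset.sum_eq_zero fun j _ => ?_
    rw [← mul_one (x.1 j), ← smul_eq_mul, ← Finsupp.smul_single, ← TensorProduct.smul_tmul,
      Algebra.smul_def, hz, zero_mul, TensorProduct.zero_tmul]
  have hbij : Function.Bijective i := by
    refine ⟨?_, hi⟩
    rw [← LinearMap.ker_eq_bot, ← Submodule.subsingleton_iff_eq_bot,
      ← Submodule.subsingleton_iff A, ← subsingleton_iff_bot_eq_top]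
    exact hbot
  exact Module.Free.of_equiv (LinearEquiv.ofBijective i hbij)
end
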